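/- Let A ⊂ ℝ² be a finite point set in general position whose convex hull is two-dimensional, let p ∈ A be a boundary point of A such that the convex hull of A∖{p} is still two-dimensional, and let T' be a triangulation of A∖{p}. For each integer i ≥ 2, the number h_i of triangulations of A in which p has degree i and which are obtained by inserting p into T' satisfies h_i ≤ C_{i−2}, where C_m denotes the m-th Catalan number. In particular h_2 ≤ 1, h_3 ≤ 1 and h_4 ≤ 2. -/

import Mathlib

/-!
In general position the boundary point `p` is an extreme point of the hull, so some linear
functional `F` attains its minimum on `A` exactly at `p`, and the other points of `A` are linearly
ordered by the slope of the ray from `p` to them (`Radial`, `raySlope`).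

Let `T` be obtained by inserting `p` into `T'`. The radially first and last points are neighbours of
`p` in `T` (`Radial.extreme_edge`), and radially consecutive neighbours span a triangle with `p`
(`Radial.consecutive`). Hence the link of `p` is a radially monotone path from the first point to the
last one, with `degree T p - 1` edges. Each of these is an edge of `T'` whose triangle with `p`
contains no other point of `A`; call such edges chords. Three facts give the bound.

* The neighbours of `p` determine `T` (`Radial.eq_of_nbrs_eq`). They determine the star of `p`, and
  two triangulations with the same star at `p`, whose other edges all belong to `T'`, agree: an edge
  of one that is not in the other would leave a triangle of the other through one of its sides,
  although both are edges of the complex `T'` (`edge_transfer`, `face_transfer`).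
* Chords coming from arbitrary `T` do not cross, in the combinatorial sense that their endpoints do
  not interleave in the radial order (`Radial.noncrossing`, `Radial.chord_noncrossing`).
* For a non-crossing family of chords on a linear order, the number of monotone paths with `m + 1`
  edges from `a` to `b` is at most `catalan m` (`card_chains_le`). If `m > 0` and `a c` is the longest
  chord from `a` with `c < b`, no chord of a path jumps over `c`, so that all these paths visit `c`;
  splitting them there yields the Catalan recursion.
-/

open Geometry
open scoped Classical

/-- The Euclidean plane `ℝ²`. -/
abbrev Plane : Type := EuclideanSpace ℝ (Fin 2)

/-- A triangulation of a finite point set `A ⊆ ℝ²` (whose convex hull is two-dimensional):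
a geometric simplicial complex all of whose faces have at most 3 elements, whose underlying
space is the convex hull of `A`, and whose vertex set is exactly `A`. -/
def IsTriangulation (A : Finset Plane) (T : SimplicialComplex ℝ Plane) : Prop :=
  (∀ s ∈ T.faces, s.card ≤ 3) ∧
  T.space = convexHull ℝ (A : Set Plane) ∧
  T.vertices = (A : Set Plane)

/-- The degree of a vertex `p` in a triangulation `T`: the number of edges
(faces with exactly 2 elements) of `T` containing `p`. -/
noncomputable def degree (T : SimplicialComplex ℝ Plane) (p : Plane) : ℕ :=
  Nat.card {s : Finset Plane | s ∈ T.faces ∧ s.card = 2 ∧ p ∈ s}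

/-- A finite point set is in general position if no three of its points are collinear. -/
def InGeneralPosition (A : Finset Plane) : Prop :=
  ∀ x ∈ A, ∀ y ∈ A, ∀ z ∈ A, x ≠ y → y ≠ z → x ≠ z →
    ¬ Collinear ℝ ({x, y, z} : Set Plane)

/-- A triangulation `T` of `A` is obtained by inserting the point `p` into a
triangulation `T'` of `A \ {p}` when every edge of `T` not containing `p` is an
edge of `T'`. -/
def ObtainedByInserting (A : Finset Plane) (p : Plane)
    (T' T : SimplicialComplex ℝ Plane) : Prop :=
  IsTriangulation A T ∧
  ∀ s ∈ T.faces, s.card = 2 → p ∉ s → s ∈ T'.faces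


/-! ### Counting monotone paths of non-crossing chords -/

/-- `chains E X a b n` is the collection of monotone paths with `n` edges from `a` to `b` along
chords of `E`, each path being recorded by its set of `n + 1` vertices, a subset of `X`. -/
noncomputable def chains {α : Type*} [LinearOrder α] (E : α → α → Prop) (X : Finset α)
    (a b : α) (n : ℕ) : Finset (Finset α) :=
  X.powerset.filter fun S => a ∈ S ∧ b ∈ S ∧ (∀ x ∈ S, a ≤ x ∧ x ≤ b) ∧ S.card = n + 1 ∧
    ∀ x ∈ S, ∀ y ∈ S, x < y → (∀ z ∈ S, ¬ (x < z ∧ z < y)) → E x y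

lemma mem_chains {α : Type*} [LinearOrder α] {E : α → α → Prop} {X : Finset α}
    {a b : α} {n : ℕ} {S : Finset α} :
    S ∈ chains E X a b n ↔ S ⊆ X ∧ a ∈ S ∧ b ∈ S ∧ (∀ x ∈ S, a ≤ x ∧ x ≤ b) ∧ S.card = n + 1 ∧
    ∀ x ∈ S, ∀ y ∈ S, x < y → (∀ z ∈ S, ¬ (x < z ∧ z < y)) → E x y := by
  simp [chains]

lemma exists_next {α : Type*} [LinearOrder α] {S : Finset α} {a b : α} (hb : b ∈ S) (hab : a < b) :
    ∃ y ∈ S, a < y ∧ y ≤ b ∧ ∀ z ∈ S, a < z → y ≤ z := by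
  obtain ⟨y, hy, hmin⟩ := (S.filter (a < ·)).exists_minimal ⟨b, by simp [hb, hab]⟩
  simp only [Finset.mem_filter] at hy hmin
  have h : ∀ z ∈ S, a < z → y ≤ z := fun z hz haz => by
    by_contra hc
    exact hc (hmin ⟨hz, haz⟩ (le_of_not_ge hc))
  exact ⟨y, hy.1, hy.2, h b hb hab, h⟩

lemma exists_prev {α : Type*} [LinearOrder α] {S : Finset α} {a b : α} (ha : a ∈ S) (hab : a < b) :
    ∃ y ∈ S, y < b ∧ a ≤ y ∧ ∀ z ∈ S, z < b → z ≤ y :=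
  let ⟨y, h1, h2, h3, h4⟩ := exists_next (α := αᵒᵈ) (S := S) (a := b) (b := a) ha hab
  ⟨y, h1, h2, h3, h4⟩

/-- A path with at least two edges from `a` to `b` visits a vertex strictly in between. -/
lemma exists_between_of_mem_chains {α : Type*} [LinearOrder α] {E : α → α → Prop} {X : Finset α}
    {a b : α} {m : ℕ} {S : Finset α} (hS : S ∈ chains E X a b (m + 2)) :
    ∃ z ∈ S, a < z ∧ z < b := by
  obtain ⟨-, ha, hb, hab, hc, -⟩ := mem_chains.1 hS
  by_contra! h
  have : S ⊆ {a, b} := fun z hz => by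
    have h1 := h z hz
    have h2 := hab z hz
    simp only [Finset.mem_insert, Finset.mem_singleton]
    by_contra! hne
    exact absurd (h1 (lt_of_le_of_ne h2.1 (Ne.symm hne.1))) (not_le.2 (lt_of_le_of_ne h2.2 hne.2))
  have := (Finset.card_le_card this).trans Finset.card_le_two
  omega

/-- The longest chord `a c` ending before `b` separates: non-crossing chords cannot jump over `c`,
so every path with at least two edges from `a` to `b` visits `c`. -/
lemma mem_of_mem_chains {α : Type*} [LinearOrder α] {E : α → α → Prop} {X : Finset α}
    (hE : ∀ a b c d, E a b → E c d → a < c → c < b → b < d → False)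
    {a b c : α} {m : ℕ} {S : Finset α} (hS : S ∈ chains E X a b (m + 2))
    (hac : E a c) (h1 : a < c) (h2 : c < b)
    (hmax : ∀ z ∈ X, E a z → a < z → z < b → z ≤ c) : c ∈ S := by
  obtain ⟨w, hwS, haw, hwb⟩ := exists_between_of_mem_chains hS
  obtain ⟨hX, ha, hb, hab, hc, hcons⟩ := mem_chains.1 hS
  by_contra hcS
  obtain ⟨x, hx, hxc, hax, hx'⟩ := exists_prev ha h1
  obtain ⟨y, hy, hcy, hyb, hy'⟩ := exists_next hb h2
  have hxy : E x y := hcons x hx y hy (hxc.trans hcy) fun z hz hh => by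
    rcases lt_trichotomy z c with h | h | h
    · exact absurd hh.1 (not_lt.2 (hx' z hz h))
    · exact hcS (h ▸ hz)
    · exact absurd hh.2 (not_lt.2 (hy' z hz h))
  rcases hax.eq_or_lt with rfl | hax
  · rcases hyb.eq_or_lt with rfl | hyb
    · -- then nothing of `S` lies strictly between `a` and `b`
      rcases lt_trichotomy w c with h | h | h
      · exact absurd haw (not_lt.2 (hx' w hwS h))
      · exact hcS (h ▸ hwS)
      · exact absurd hwb (not_lt.2 (hy' w hwS h))
    · exact absurd hcy (not_lt.2 (hmax y (hX hy) hxy (h1.trans hcy) hyb))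
  · exact hE a c x y hac hxy hax hxc hcy

lemma card_filter_le_add_card_filter_ge {α : Type*} [LinearOrder α] {S : Finset α} {c : α}
    (hc : c ∈ S) : (S.filter (· ≤ c)).card + (S.filter (c ≤ ·)).card = S.card + 1 := by
  rw [← Finset.card_union_add_card_inter, ← Finset.filter_or, ← Finset.filter_and]
  have h1 : S.filter (fun a => a ≤ c ∨ c ≤ a) = S := Finset.filter_true_of_mem fun x _ => le_total x c
  have h2 : S.filter (fun a => a ≤ c ∧ c ≤ a) = {c} := by
    ext x
    simp only [Finset.mem_filter, Finset.mem_singleton]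
    exact ⟨fun h => le_antisymm h.2.1 h.2.2, fun h => by subst h; exact ⟨hc, le_rfl, le_rfl⟩⟩
  rw [h1, h2, Finset.card_singleton]

lemma two_le_card {α : Type*} {S : Finset α} {a b : α} (ha : a ∈ S) (hb : b ∈ S)
    (hab : a ≠ b) : 2 ≤ S.card :=
  Finset.one_lt_card.2 ⟨a, ha, b, hb, hab⟩

/-- Cutting all paths at a common separating vertex `c` yields the Catalan recursion. -/
theorem card_chains_le {α : Type*} [LinearOrder α] {E : α → α → Prop} {X : Finset α}
    (hE : ∀ a b c d, E a b → E c d → a < c → c < b → b < d → False) (m : ℕ) :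
    ∀ a b, (chains E X a b (m + 1)).card ≤ catalan m := by
  induction m using Nat.strong_induction_on with
  | _ m ih =>
  intro a b
  rcases m with _ | m
  · rw [catalan_zero, Finset.card_le_one]
    have key : ∀ S ∈ chains E X a b (0 + 1), S = {a, b} := fun S hS => by
      obtain ⟨-, ha, hb, hab, hc, -⟩ := mem_chains.1 hS
      symm
      apply Finset.eq_of_subset_of_card_le
      · intro x hx
        simp only [Finset.mem_insert, Finset.mem_singleton] at hx
        rcases hx with rfl | rfl <;> assumption
      · rw [hc]
        have hne : a ≠ b := by
          rintro rfl
          have : S ⊆ {a} := fun x hx => by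
            simpa using le_antisymm (hab x hx).2 (hab x hx).1
          have := Finset.card_le_card this
          simp at this
          omega
        rw [Finset.card_pair hne]
    intro S hS S' hS'
    rw [key S hS, key S' hS']
  · by_cases hex : (X.filter fun c => E a c ∧ a < c ∧ c < b).Nonempty
    · obtain ⟨c, hc, hmax⟩ := Finset.exists_maximal hex
      simp only [Finset.mem_filter] at hc hmax
      obtain ⟨hcX, hac, h1, h2⟩ := hc
      have hmax' : ∀ z ∈ X, E a z → a < z → z < b → z ≤ c := fun z hz e1 e2 e3 => by
        by_contra hh
        exact hh (hmax ⟨hz, e1, e2, e3⟩ (le_of_not_ge hh))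
      calc (chains E X a b (m + 1 + 1)).card
          ≤ ((Finset.HasAntidiagonal.antidiagonal m).biUnion fun ij =>
              chains E X a c (ij.1 + 1) ×ˢ chains E X c b (ij.2 + 1)).card := by
            refine Finset.card_le_card_of_injOn
              (fun S => (S.filter (· ≤ c), S.filter (c ≤ ·))) ?_ ?_
            · intro S hS
              have hcS : c ∈ S := mem_of_mem_chains hE hS hac h1 h2 hmax'
              obtain ⟨hX, ha, hb, hab, hcard, hcons⟩ := mem_chains.1 hS
              have hsum := card_filter_le_add_card_filter_ge hcS
              have hl : 2 ≤ (S.filter (· ≤ c)).card :=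
                two_le_card (a := a) (b := c) (by simp [ha, h1.le]) (by simp [hcS]) h1.ne
              have hr : 2 ≤ (S.filter (c ≤ ·)).card :=
                two_le_card (a := c) (b := b) (by simp [hcS]) (by simp [hb, h2.le]) h2.ne
              simp only [Finset.coe_biUnion, Set.mem_iUnion, Finset.mem_coe]
              refine ⟨((S.filter (· ≤ c)).card - 2, (S.filter (c ≤ ·)).card - 2), ?_, ?_⟩
              · rw [Finset.HasAntidiagonal.mem_antidiagonal]
                dsimp only
                omega
              · rw [Finset.mem_product, mem_chains, mem_chains]
                dsimp only
                refine ⟨⟨(Finset.filter_subset _ _).trans hX, by simp [ha, h1.le], by simp [hcS],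
                  ?_, by omega, ?_⟩, ⟨(Finset.filter_subset _ _).trans hX, by simp [hcS],
                  by simp [hb, h2.le], ?_, by omega, ?_⟩⟩
                · intro x hx
                  rw [Finset.mem_filter] at hx
                  exact ⟨(hab x hx.1).1, hx.2⟩
                · intro x hx y hy hxy hz
                  rw [Finset.mem_filter] at hx hy
                  refine hcons x hx.1 y hy.1 hxy fun z hzS hh => hz z ?_ hh
                  rw [Finset.mem_filter]
                  exact ⟨hzS, hh.2.le.trans hy.2⟩
                · intro x hx
                  rw [Finset.mem_filter] at hx
                  exact ⟨hx.2, (hab x hx.1).2⟩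
                · intro x hx y hy hxy hz
                  rw [Finset.mem_filter] at hx hy
                  refine hcons x hx.1 y hy.1 hxy fun z hzS hh => hz z ?_ hh
                  rw [Finset.mem_filter]
                  exact ⟨hzS, hx.2.trans hh.1.le⟩
            · intro S _ S' _ h
              simp only [Prod.mk.injEq] at h
              ext x
              have e1 := congrArg (x ∈ ·) h.1
              have e2 := congrArg (x ∈ ·) h.2
              simp only [Finset.mem_filter, eq_iff_iff] at e1 e2
              rcases le_total x c with hx | hx
              · simpa [hx] using e1
              · simpa [hx] using e2
        _ ≤ ∑ ij ∈ Finset.HasAntidiagonal.antidiagonal m,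
              (chains E X a c (ij.1 + 1) ×ˢ chains E X c b (ij.2 + 1)).card :=
            Finset.card_biUnion_le
        _ ≤ ∑ ij ∈ Finset.HasAntidiagonal.antidiagonal m, catalan ij.1 * catalan ij.2 := by
            refine Finset.sum_le_sum fun ij hij => ?_
            rw [Finset.HasAntidiagonal.mem_antidiagonal] at hij
            rw [Finset.card_product]
            exact Nat.mul_le_mul (ih _ (by omega) _ _) (ih _ (by omega) _ _)
        _ = catalan (m + 1) := (catalan_succ' m).symm
    · -- no chord leaves `a` before `b`, so there is no path with two or more edges
      have : chains E X a b (m + 1 + 1) = ∅ := by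
        rw [Finset.eq_empty_iff_forall_notMem]
        intro S hS
        obtain ⟨w, hwS, haw, hwb⟩ := exists_between_of_mem_chains hS
        obtain ⟨hX, ha, hb, hab, hc, hcons⟩ := mem_chains.1 hS
        obtain ⟨y, hy, hay, hyw, hmin⟩ := exists_next hwS haw
        refine hex ⟨y, ?_⟩
        rw [Finset.mem_filter]
        refine ⟨hX hy, hcons a ha y hy hay fun z hz hh => ?_, hay, hyw.trans_lt hwb⟩
        exact absurd hh.2 (not_lt.2 (hmin z hz hh.1))
      rw [this]
      exact Nat.zero_le _

/-! ### Barycentric coordinates -/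

/-- Signed barycentric coordinates with respect to an affinely independent set are unique. -/
lemma bary_unique {s : Finset Plane} (hs : AffineIndependent ℝ ((↑) : s → Plane))
    {w w' : Plane → ℝ} (h1 : ∑ y ∈ s, w y = ∑ y ∈ s, w' y)
    (h2 : ∑ y ∈ s, w y • y = ∑ y ∈ s, w' y • y) : ∀ y ∈ s, w y = w' y := by
  intro y hy
  have h := (affineIndependent_iff (ι := s) (k := ℝ) (p := ((↑) : s → Plane))).1 hs
    Finset.univ (fun i => w i - w' i)
    (by
      rw [Finset.sum_coe_sort s (fun i => w i - w' i), Finset.sum_sub_distrib, h1, sub_self])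
    (by
      rw [Finset.sum_coe_sort s (fun i => (w i - w' i) • i)]
      simp only [sub_smul]
      rw [Finset.sum_sub_distrib, h2, sub_self])
    ⟨y, hy⟩ (Finset.mem_univ _)
  exact sub_eq_zero.1 h

lemma mem_hull_iff {s : Finset Plane} {x : Plane} : x ∈ convexHull ℝ (s : Set Plane) ↔
    ∃ w : Plane → ℝ, (∀ y ∈ s, 0 ≤ w y) ∧ ∑ y ∈ s, w y = 1 ∧ ∑ y ∈ s, w y • y = x :=
  Finset.mem_convexHull'

/-- A point of the hull of a subset of `s` is a convex combination of `s` that puts no weight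
outside the subset. -/
lemma exists_weights_of_subset {s f : Finset Plane} {x : Plane} (hf : f ⊆ s)
    (hx : x ∈ convexHull ℝ (f : Set Plane)) :
    ∃ w : Plane → ℝ, (∀ y, 0 ≤ w y) ∧ (∀ y, y ∉ f → w y = 0) ∧
      ∑ y ∈ s, w y = 1 ∧ ∑ y ∈ s, w y • y = x := by
  obtain ⟨w, h0, h1, h2⟩ := mem_hull_iff.1 hx
  refine ⟨fun y => if y ∈ f then w y else 0, ?_, ?_, ?_, ?_⟩
  · intro y
    dsimp only
    split_ifs with h
    exacts [h0 y h, le_rfl]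
  · intro y hy
    simp [hy]
  · rw [← h1, ← Finset.sum_subset hf]
    · exact Finset.sum_congr rfl fun y hy => by simp [hy]
    · intro y _ hy
      simp [hy]
  · rw [← h2, ← Finset.sum_subset hf]
    · exact Finset.sum_congr rfl fun y hy => by simp [hy]
    · intro y _ hy
      simp [hy]

/-- A point in the relative interior of a simplex lies on no proper face. -/
lemma subset_of_pos {s f : Finset Plane} (hs : AffineIndependent ℝ ((↑) : s → Plane))
    {w : Plane → ℝ} {x : Plane} (hw : ∀ y ∈ s, 0 < w y) (h1 : ∑ y ∈ s, w y = 1)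
    (h2 : ∑ y ∈ s, w y • y = x) (hx : x ∈ convexHull ℝ ((s : Set Plane) ∩ f)) : s ⊆ f := by
  rw [← Finset.coe_inter] at hx
  obtain ⟨w', -, h0, h1', h2'⟩ := exists_weights_of_subset Finset.inter_subset_left hx
  intro y hy
  by_contra hyf
  have := bary_unique hs (h1.trans h1'.symm) (h2.trans h2'.symm) y hy
  rw [h0 y (by simp [hyf])] at this
  exact (hw y hy).ne' this

/-- A ray from a vertex `v` of a simplex that meets the opposite face leaves the simplex there. -/
lemma no_exit_from_vertex {s f : Finset Plane} (hs : AffineIndependent ℝ ((↑) : s → Plane))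
    {v x y : Plane} (hv : v ∈ s) (hvf : v ∉ f) (hx : x ∈ convexHull ℝ (s : Set Plane))
    (hy : y ∈ convexHull ℝ ((s : Set Plane) ∩ f)) (hyx : y ∈ segment ℝ v x) : y = x := by
  rw [← Finset.coe_inter] at hy
  obtain ⟨w', -, h0, h1', h2'⟩ := exists_weights_of_subset Finset.inter_subset_left hy
  obtain ⟨w, hw0, hw1, hw2⟩ := mem_hull_iff.1 hx
  obtain ⟨α, β, hα, hβ, hab, rfl⟩ := hyx
  have key := bary_unique hs (w := fun z => (if z = v then α else 0) + β * w z) (w' := w')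
    (by
      rw [Finset.sum_add_distrib, ← Finset.mul_sum, hw1, h1', Finset.sum_ite_eq' s v]
      simp [hv, hab])
    (by
      simp only [add_smul, ite_smul, zero_smul, mul_smul]
      rw [Finset.sum_add_distrib, ← Finset.smul_sum, hw2, h2', Finset.sum_ite_eq' s v]
      simp [hv]) v hv
  rw [h0 v (by simp [hvf])] at key
  simp only [if_true] at key
  have h3 := mul_nonneg hβ (hw0 v hv)
  have : α = 0 := by linarith
  have h4 : β = 1 := by linarith
  rw [this, h4]
  simp

/-- A segment from a point of a triangle to a point outside of it meets an edge of the triangle. -/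
lemma exists_exit {s : Finset Plane} (hs : AffineIndependent ℝ ((↑) : s → Plane))
    (hc : s.card = 3) {x a : Plane} (hx : x ∈ convexHull ℝ (s : Set Plane))
    (ha : a ∉ convexHull ℝ (s : Set Plane)) :
    ∃ y ∈ segment ℝ a x, ∃ v ∈ s, y ∈ convexHull ℝ ((s.erase v : Finset Plane) : Set Plane) := by
  have htop : affineSpan ℝ (Set.range ((↑) : s → Plane)) = ⊤ := by
    rw [hs.affineSpan_eq_top_iff_card_eq_finrank_add_one]
    simp [hc]
  let B : AffineBasis s ℝ Plane := ⟨(↑), hs, htop⟩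
  have hB : Set.range B = (s : Set Plane) := by
    change Set.range ((↑) : s → Plane) = _
    simp
  have hcl : IsClosed (convexHull ℝ (s : Set Plane)) :=
    (s.finite_toSet.isCompact_convexHull (𝕜 := ℝ)).isClosed
  -- the segment is connected, so it cannot jump from the interior to the complement
  obtain ⟨y, hy, hy1, hy2⟩ : ∃ y ∈ segment ℝ a x, y ∈ convexHull ℝ (s : Set Plane) ∧
      y ∉ interior (convexHull ℝ (s : Set Plane)) := by
    by_contra! h
    obtain ⟨z, -, hz1, hz2⟩ := (convex_segment (𝕜 := ℝ) a x).isPreconnected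
      (interior (convexHull ℝ (s : Set Plane))) (convexHull ℝ (s : Set Plane))ᶜ
      isOpen_interior hcl.isOpen_compl
      (fun z hz => (em (z ∈ convexHull ℝ (s : Set Plane))).imp (h z hz) id)
      ⟨x, right_mem_segment ℝ a x, h x (right_mem_segment ℝ a x) hx⟩
      ⟨a, left_mem_segment ℝ a x, ha⟩
    exact hz2 (interior_subset hz1)
  refine ⟨y, hy, ?_⟩
  obtain ⟨w, h0, h1, h2⟩ := mem_hull_iff.1 hy1
  have : ∃ v ∈ s, w v = 0 := by
    by_contra! hne
    refine hy2 ?_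
    rw [← hB, B.interior_convexHull]
    intro i
    have hcomb : y = Finset.univ.affineCombination ℝ B (fun i : s => w i) := by
      rw [Finset.affineCombination_eq_linear_combination]
      · rw [← h2]
        exact (Finset.sum_coe_sort s (fun i => w i • i)).symm
      · rw [Finset.sum_coe_sort s w, h1]
    rw [hcomb, B.coord_apply_combination_of_mem (Finset.mem_univ i)]
    · exact lt_of_le_of_ne (h0 i i.2) (hne i i.2).symm
    · rw [Finset.sum_coe_sort s w, h1]
  obtain ⟨v, hv, hv0⟩ := this
  refine ⟨v, hv, mem_hull_iff.2 ⟨w, fun z hz => h0 z (Finset.mem_of_mem_erase hz), ?_, ?_⟩⟩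
  · rw [← h1, ← Finset.add_sum_erase s w hv, hv0, zero_add]
  · rw [← h2, ← Finset.add_sum_erase s (fun z => w z • z) hv, hv0, zero_smul, zero_add]

/-! ### Coordinates adapted to the hull vertex -/

/-- The linear functional obtained from `f` by a quarter turn of its gradient. -/
noncomputable def rot (f : Plane →ₗ[ℝ] ℝ) : Plane →ₗ[ℝ] ℝ where
  toFun v := f !₂[1, 0] * v 1 - f !₂[0, 1] * v 0
  map_add' := by intros; simp; ring
  map_smul' := by intros; simp; ring

lemma apply_eq (f : Plane →ₗ[ℝ] ℝ) (v : Plane) : f v = f !₂[1, 0] * v 0 + f !₂[0, 1] * v 1 := by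
  have : v = v 0 • !₂[1, 0] + v 1 • !₂[0, 1] := by
    ext i; fin_cases i <;> simp
  conv_lhs => rw [this]
  rw [map_add, map_smul, map_smul, smul_eq_mul, smul_eq_mul]
  ring

/-- A nonzero functional and its quarter turn are coordinates of the plane. -/
lemma eq_zero_of_rot {f : Plane →ₗ[ℝ] ℝ} (hf : f ≠ 0) {v : Plane} (h1 : f v = 0)
    (h2 : rot f v = 0) : v = 0 := by
  set α := f !₂[1, 0] with hα
  set β := f !₂[0, 1] with hβ
  have e1 : α * v 0 + β * v 1 = 0 := by rw [← h1, apply_eq f v]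
  have e2 : α * v 1 - β * v 0 = 0 := h2
  have hne : α ^ 2 + β ^ 2 ≠ 0 := by
    intro h
    have ha : α = 0 := by nlinarith [sq_nonneg α, sq_nonneg β]
    have hb : β = 0 := by nlinarith [sq_nonneg α, sq_nonneg β]
    exact hf (LinearMap.ext fun w => by rw [apply_eq f w, ← hα, ← hβ, ha, hb]; simp)
  have h0 : v 0 = 0 := by
    have : (α ^ 2 + β ^ 2) * v 0 = 0 := by linear_combination α * e1 - β * e2
    exact (mul_eq_zero.1 this).resolve_left hne
  have h1 : v 1 = 0 := by
    have : (α ^ 2 + β ^ 2) * v 1 = 0 := by linear_combination β * e1 + α * e2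
    exact (mul_eq_zero.1 this).resolve_left hne
  ext i; fin_cases i <;> simp [h0, h1]

lemma collinear_of_smul {p a b : Plane} {r : ℝ} (h : b - p = r • (a - p)) :
    Collinear ℝ ({p, a, b} : Set Plane) := by
  rw [collinear_iff_of_mem (p₀ := p) (by simp)]
  refine ⟨a - p, ?_⟩
  intro x hx
  simp only [Set.mem_insert_iff, Set.mem_singleton_iff] at hx
  rcases hx with rfl | rfl | rfl
  · exact ⟨0, by simp⟩
  · exact ⟨1, by simp⟩
  · exact ⟨r, by rw [← h]; simp⟩

/-- In general position a boundary point is an extreme point. -/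
lemma notMem_hull_erase {A : Finset Plane} (hgen : InGeneralPosition A)
    (hdim : affineSpan ℝ (A : Set Plane) = ⊤) {p : Plane} (hp : p ∈ A)
    (hpbd : p ∈ frontier (convexHull ℝ (A : Set Plane))) :
    p ∉ convexHull ℝ ((A.erase p : Finset Plane) : Set Plane) := by
  intro hmem
  have hcv : Convex ℝ (convexHull ℝ (A : Set Plane)) := convex_convexHull ℝ _
  have hint : (interior (convexHull ℝ (A : Set Plane))).Nonempty :=
    interior_convexHull_nonempty_iff_affineSpan_eq_top.2 hdim
  obtain ⟨f, hf⟩ := geometric_hahn_banach_point_open hcv.interior isOpen_interior hpbd.2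
  have hf0 : (f : Plane →ₗ[ℝ] ℝ) ≠ 0 := by
    obtain ⟨z, hz⟩ := hint
    intro h
    have hh := hf z hz
    have e : ∀ u, f u = 0 := fun u => LinearMap.congr_fun h u
    rw [e, e] at hh
    exact lt_irrefl _ hh
  have hle : ∀ q ∈ A, f p ≤ f q := by
    intro q hq
    have hqc : q ∈ closure (interior (convexHull ℝ (A : Set Plane))) := by
      rw [hcv.closure_interior_eq_closure_of_nonempty_interior hint]
      exact subset_closure (subset_convexHull ℝ _ hq)
    have hcl : IsClosed {z | f p ≤ f z} := isClosed_le continuous_const f.continuous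
    exact closure_minimal (fun z hz => (hf z hz).le) hcl hqc
  obtain ⟨w, h0, h1, h2⟩ := mem_hull_iff.1 hmem
  have hsum : ∑ y ∈ A.erase p, w y * (f y - f p) = 0 := by
    have : ∑ y ∈ A.erase p, w y * f y = f p := by
      conv_rhs => rw [← h2]
      rw [map_sum]
      simp
    simp only [mul_sub]
    rw [Finset.sum_sub_distrib, ← Finset.sum_mul, h1, this]
    ring
  have hz := (Finset.sum_eq_zero_iff_of_nonneg fun y hy =>
    mul_nonneg (h0 y hy) (sub_nonneg.2 (hle y (Finset.mem_of_mem_erase hy)))).1 hsum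
  have hlev : ∀ y ∈ A.erase p, w y ≠ 0 → f (y - p) = 0 := fun y hy hne => by
    rw [map_sub]
    exact (mul_eq_zero.1 (hz y hy)).resolve_left hne
  obtain ⟨q, hq, hq0⟩ : ∃ q ∈ A.erase p, w q ≠ 0 := by
    by_contra! h
    rw [Finset.sum_eq_zero h] at h1
    exact zero_ne_one h1
  have hqp := Finset.ne_of_mem_erase hq
  by_cases hone : ∀ y ∈ A.erase p, y ≠ q → w y = 0
  · rw [Finset.sum_eq_single_of_mem q hq hone] at h1
    rw [Finset.sum_eq_single_of_mem q hq (fun y hy hne => by rw [hone y hy hne, zero_smul]), h1,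
      one_smul] at h2
    exact hqp h2
  · push Not at hone
    obtain ⟨r, hr, hrq, hr0⟩ := hone
    have hrp := Finset.ne_of_mem_erase hr
    refine hgen p hp q (Finset.mem_of_mem_erase hq) r (Finset.mem_of_mem_erase hr) hqp.symm
      hrq.symm hrp.symm ?_
    have hG : rot (f : Plane →ₗ[ℝ] ℝ) (q - p) ≠ 0 := fun h =>
      hqp (sub_eq_zero.1 (eq_zero_of_rot hf0 (hlev q hq hq0) h))
    apply collinear_of_smul
      (r := rot (f : Plane →ₗ[ℝ] ℝ) (r - p) / rot (f : Plane →ₗ[ℝ] ℝ) (q - p))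
    rw [← sub_eq_zero]
    refine eq_zero_of_rot hf0 ?_ ?_
    · rw [map_sub, map_smul]
      have e1 : (f : Plane →ₗ[ℝ] ℝ) (r - p) = 0 := hlev r hr hr0
      have e2 : (f : Plane →ₗ[ℝ] ℝ) (q - p) = 0 := hlev q hq hq0
      rw [e1, e2]
      simp
    · rw [map_sub, map_smul, smul_eq_mul]
      field_simp
      ring

/-- The oriented area form of the coordinates `F`, `rot F`. -/
noncomputable def area (F : Plane →ₗ[ℝ] ℝ) (u v : Plane) : ℝ := F u * rot F v - F v * rot F u

lemma area_add_right (F : Plane →ₗ[ℝ] ℝ) (u v w : Plane) :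
    area F u (v + w) = area F u v + area F u w := by
  simp only [area, map_add]; ring

lemma area_smul_right (F : Plane →ₗ[ℝ] ℝ) (u v : Plane) (r : ℝ) :
    area F u (r • v) = r * area F u v := by
  simp only [area, map_smul, smul_eq_mul]; ring

lemma area_self (F : Plane →ₗ[ℝ] ℝ) (u : Plane) : area F u u = 0 := by
  simp only [area]; ring

lemma area_swap (F : Plane →ₗ[ℝ] ℝ) (u v : Plane) : area F u v = - area F v u := by
  simp only [area]; ring

/-- The slope of the ray from `p` to `q`; it orders radially any set of points on the positive
side of the line `F = F p`. -/
noncomputable def raySlope (F : Plane →ₗ[ℝ] ℝ) (p q : Plane) : ℝ := rot F (q - p) / F (q - p)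

/-- The standing assumptions: `A` is in general position, and `F` is a linear functional which is
minimal on `A` precisely at the extreme point `p`. -/
structure Radial (A : Finset Plane) (p : Plane) (F : Plane →ₗ[ℝ] ℝ) : Prop where
  gen : InGeneralPosition A
  mem : p ∈ A
  ne : F ≠ 0
  pos : ∀ q ∈ A.erase p, 0 < F (q - p)
  ext : p ∉ convexHull ℝ ((A.erase p : Finset Plane) : Set Plane)

lemma exists_radial {A : Finset Plane} (hgen : InGeneralPosition A)
    (hdim : affineSpan ℝ (A : Set Plane) = ⊤) {p : Plane} (hp : p ∈ A)
    (hpbd : p ∈ frontier (convexHull ℝ (A : Set Plane))) (hne : (A.erase p).Nonempty) :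
    ∃ F, Radial A p F := by
  have hext := notMem_hull_erase hgen hdim hp hpbd
  obtain ⟨f, u, h1, h2⟩ := geometric_hahn_banach_point_closed (convex_convexHull ℝ _)
    ((A.erase p).finite_toSet.isCompact_convexHull (𝕜 := ℝ)).isClosed hext
  have hpos : ∀ q ∈ A.erase p, 0 < f (q - p) := fun q hq => by
    rw [map_sub, sub_pos]
    exact h1.trans (h2 q (subset_convexHull ℝ _ hq))
  refine ⟨(f : Plane →ₗ[ℝ] ℝ), hgen, hp, fun h => ?_, hpos, hext⟩
  obtain ⟨q, hq⟩ := hne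
  have e : f (q - p) = 0 := LinearMap.congr_fun h (q - p)
  exact (hpos q hq).ne' e

section Radial

variable {A : Finset Plane} {p : Plane} {F : Plane →ₗ[ℝ] ℝ}

lemma Radial.lt_iff (h : Radial A p F) {a b : Plane} (ha : a ∈ A.erase p) (hb : b ∈ A.erase p) :
    raySlope F p a < raySlope F p b ↔ 0 < area F (a - p) (b - p) := by
  rw [raySlope, raySlope, div_lt_div_iff₀ (h.pos a ha) (h.pos b hb), area, sub_pos]
  constructor <;> intro h <;> linarith

lemma Radial.inj (h : Radial A p F) {a b : Plane} (ha : a ∈ A.erase p) (hb : b ∈ A.erase p)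
    (hab : raySlope F p a = raySlope F p b) : a = b := by
  by_contra hne
  have h1 := h.pos a ha
  have h2 := h.pos b hb
  rw [raySlope, raySlope, div_eq_div_iff h1.ne' h2.ne'] at hab
  refine h.gen p h.mem a (Finset.mem_of_mem_erase ha) b (Finset.mem_of_mem_erase hb)
    (Finset.ne_of_mem_erase ha).symm hne (Finset.ne_of_mem_erase hb).symm
    (collinear_of_smul (r := F (b - p) / F (a - p)) ?_)
  rw [← sub_eq_zero]
  refine eq_zero_of_rot h.ne ?_ ?_
  · rw [map_sub, map_smul, smul_eq_mul]
    field_simp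
    ring
  · rw [map_sub, map_smul, smul_eq_mul]
    field_simp
    linarith

lemma Radial.cone (h : Radial A p F) {a b c : Plane} (ha : a ∈ A.erase p) (hb : b ∈ A.erase p)
    (hc : c ∈ A.erase p) (h1 : raySlope F p a < raySlope F p c) (h2 : raySlope F p c < raySlope F p b) :
    ∃ α β : ℝ, 0 < α ∧ 0 < β ∧ c - p = α • (a - p) + β • (b - p) := by
  have h3 := (h.lt_iff ha hb).1 (h1.trans h2)
  rw [h.lt_iff ha hc] at h1
  rw [h.lt_iff hc hb] at h2
  refine ⟨area F (c - p) (b - p) / area F (a - p) (b - p),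
    area F (a - p) (c - p) / area F (a - p) (b - p), div_pos h2 h3, div_pos h1 h3, ?_⟩
  rw [← sub_eq_zero]
  refine eq_zero_of_rot h.ne ?_ ?_
  · rw [map_sub, map_add, map_smul, map_smul, smul_eq_mul, smul_eq_mul]
    field_simp
    simp only [area]
    ring
  · rw [map_sub, map_add, map_smul, map_smul, smul_eq_mul, smul_eq_mul]
    field_simp
    simp only [area]
    ring

lemma mem_hull_triple {p a b x : Plane} {α β : ℝ} (hα : 0 ≤ α) (hβ : 0 ≤ β) (hab : α + β ≤ 1)
    (hx : x - p = α • (a - p) + β • (b - p)) :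
    x ∈ convexHull ℝ (({p, a, b} : Finset Plane) : Set Plane) := by
  have hcv := convex_convexHull ℝ (({p, a, b} : Finset Plane) : Set Plane)
  have hp : p ∈ convexHull ℝ (({p, a, b} : Finset Plane) : Set Plane) :=
    subset_convexHull ℝ _ (by simp)
  have ha : a ∈ convexHull ℝ (({p, a, b} : Finset Plane) : Set Plane) :=
    subset_convexHull ℝ _ (by simp)
  have hb : b ∈ convexHull ℝ (({p, a, b} : Finset Plane) : Set Plane) :=
    subset_convexHull ℝ _ (by simp)
  have := hcv.sum_mem (t := Finset.univ) (w := ![1 - α - β, α, β]) (z := ![p, a, b])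
    (by intro i _; fin_cases i <;> simp <;> linarith)
    (by simp [Fin.sum_univ_three]; ring)
    (by intro i _; fin_cases i <;> simp only [Fin.zero_eta, Fin.mk_one, Fin.reduceFinMk,
          Matrix.cons_val] <;> assumption)
  have e : x = (1 - α - β) • p + α • a + β • b := by
    linear_combination (norm := module) hx
  rw [e]
  simpa [Fin.sum_univ_three] using this

/-! ### The link of the inserted point -/

lemma IsTriangulation.subset {T : SimplicialComplex ℝ Plane} (hT : IsTriangulation A T)
    {s : Finset Plane} (hs : s ∈ T.faces) : s ⊆ A := fun x hx => by
  have : x ∈ T.vertices := T.down_closed hs (Finset.singleton_subset_iff.2 hx) (by simp)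
  rwa [hT.2.2] at this

lemma IsTriangulation.mem_of_mem_hull {T : SimplicialComplex ℝ Plane} (hT : IsTriangulation A T)
    {s : Finset Plane} (hs : s ∈ T.faces) {x : Plane} (hx : x ∈ A)
    (hxs : x ∈ convexHull ℝ (s : Set Plane)) : x ∈ s := by
  have : x ∈ T.vertices := by rw [hT.2.2]; exact hx
  exact (SimplicialComplex.vertex_mem_convexHull_iff this hs).1 hxs

lemma IsTriangulation.exists_face {T : SimplicialComplex ℝ Plane} (hT : IsTriangulation A T)
    {x : Plane} (hx : x ∈ convexHull ℝ (A : Set Plane)) :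
    ∃ s ∈ T.faces, x ∈ convexHull ℝ (s : Set Plane) := by
  rw [← hT.2.1] at hx
  exact SimplicialComplex.mem_space_iff.1 hx

/-- No edge at `p` runs through the interior of a triangle at `p`. -/
lemma Radial.not_between (h : Radial A p F) {T : SimplicialComplex ℝ Plane}
    {q r a : Plane} (hq : q ∈ A.erase p) (hr : r ∈ A.erase p) (ha : a ∈ A.erase p)
    (h1 : ({p, q, r} : Finset Plane) ∈ T.faces) (h2 : ({p, a} : Finset Plane) ∈ T.faces)
    (h3 : raySlope F p q < raySlope F p a) (h4 : raySlope F p a < raySlope F p r) : False := by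
  obtain ⟨α, β, hα, hβ, e⟩ := h.cone hq hr ha h3 h4
  have hpos : 0 < 1 + α + β := by linarith
  set ε : ℝ := 1 / (1 + α + β) with hε
  have hε0 : 0 < ε := by positivity
  have hε1 : ε * (1 + α + β) = 1 := by rw [hε]; field_simp
  have hy1 : p + ε • (a - p) ∈ convexHull ℝ (({p, q, r} : Finset Plane) : Set Plane) := by
    refine mem_hull_triple (α := ε * α) (β := ε * β) (by positivity) (by positivity)
      (by nlinarith) ?_
    rw [e]
    module
  have hy2 : p + ε • (a - p) ∈ convexHull ℝ (({p, a} : Finset Plane) : Set Plane) := by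
    rw [Finset.coe_pair, convexHull_pair]
    have : 0 < ε * α := by positivity
    have : 0 < ε * β := by positivity
    refine ⟨1 - ε, ε, by nlinarith, hε0.le, by ring, by module⟩
  have hy := T.inter_subset_convexHull h1 h2 ⟨hy1, hy2⟩
  have haq : a ≠ q := by rintro rfl; exact lt_irrefl _ h3
  have har : a ≠ r := by rintro rfl; exact lt_irrefl _ h4
  have hsub : ((({p, q, r} : Finset Plane) : Set Plane) ∩ (({p, a} : Finset Plane) : Set Plane))
      ⊆ {p} := by
    rintro z ⟨hz1, hz2⟩
    simp only [Finset.coe_insert, Finset.coe_singleton, Set.mem_insert_iff,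
      Set.mem_singleton_iff] at hz1 hz2 ⊢
    rcases hz2 with rfl | rfl
    · rfl
    · rcases hz1 with rfl | rfl | rfl
      · rfl
      · exact absurd rfl haq
      · exact absurd rfl har
  have := convexHull_mono (𝕜 := ℝ) hsub hy
  rw [convexHull_singleton, Set.mem_singleton_iff, add_eq_left, smul_eq_zero] at this
  rcases this with h0 | h0
  · exact hε0.ne' h0
  · exact Finset.ne_of_mem_erase ha (sub_eq_zero.1 h0)

/-- The first and last points in radial order are joined to `p`: the segment to such a point lies
on the boundary of the hull, so that the face covering its midpoint must contain it. -/
lemma Radial.extreme_edge (h : Radial A p F) {T : SimplicialComplex ℝ Plane}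
    (hT : IsTriangulation A T) {q : Plane} (hq : q ∈ A.erase p) (H : Plane →ₗ[ℝ] ℝ)
    (hH : H (q - p) = 0) (hpos : ∀ y ∈ A.erase p, y ≠ q → 0 < H (y - p)) :
    ({p, q} : Finset Plane) ∈ T.faces := by
  set x : Plane := (1 / 2 : ℝ) • p + (1 / 2 : ℝ) • q with hx
  have hxA : x ∈ convexHull ℝ (A : Set Plane) :=
    (convex_convexHull ℝ _) (subset_convexHull ℝ _ h.mem)
      (subset_convexHull ℝ _ (Finset.mem_of_mem_erase hq)) (by norm_num) (by norm_num)
      (by norm_num)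
  obtain ⟨s, hs, hxs⟩ := hT.exists_face hxA
  obtain ⟨w, h0, h1, h2⟩ := mem_hull_iff.1 hxs
  have hsA := hT.subset hs
  have hxp : x - p = ∑ y ∈ s, w y • (y - p) := by
    simp only [smul_sub]
    rw [Finset.sum_sub_distrib, h2, ← Finset.sum_smul, h1, one_smul]
  have hxp' : x - p = (1 / 2 : ℝ) • (q - p) := by rw [hx]; module
  have hnn : ∀ y ∈ s, 0 ≤ H (y - p) := fun y hy => by
    by_cases hyp : y = p
    · simp [hyp]
    by_cases hyq : y = q
    · rw [hyq, hH]
    · exact (hpos y (Finset.mem_erase.2 ⟨hyp, hsA hy⟩) hyq).le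
  have hz : ∀ y ∈ s, y ≠ p → y ≠ q → w y = 0 := fun y hy hyp hyq => by
    have hsum : ∑ y ∈ s, w y * H (y - p) = 0 := by
      have := congrArg H hxp
      rw [hxp', map_smul, hH, map_sum] at this
      simpa using this.symm
    have := (Finset.sum_eq_zero_iff_of_nonneg fun y hy => mul_nonneg (h0 y hy) (hnn y hy)).1
      hsum y hy
    exact (mul_eq_zero.1 this).resolve_right
      (hpos y (Finset.mem_erase.2 ⟨hyp, hsA hy⟩) hyq).ne'
  have hqp : q - p ≠ 0 := sub_ne_zero.2 (Finset.ne_of_mem_erase hq)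
  have hqs : q ∈ s := by
    by_contra hqs
    have : ∑ y ∈ s, w y • (y - p) = 0 := Finset.sum_eq_zero fun y hy => by
      by_cases hyp : y = p
      · simp [hyp]
      · rw [hz y hy hyp (by rintro rfl; exact hqs hy), zero_smul]
    rw [this, hxp', smul_eq_zero] at hxp
    exact hxp.elim (by norm_num) hqp
  have hps : p ∈ s := by
    by_contra hps
    have hz' : ∀ y ∈ s, y ≠ q → w y = 0 := fun y hy hyq =>
      hz y hy (by rintro rfl; exact hps hy) hyq
    rw [Finset.sum_eq_single_of_mem q hqs hz'] at h1
    rw [Finset.sum_eq_single_of_mem q hqs (fun y hy hyq => by rw [hz' y hy hyq, zero_smul]), h1,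
      hxp'] at hxp
    have : (1 / 2 : ℝ) • (q - p) = 0 := by
      linear_combination (norm := module) (-1 : ℝ) • hxp
    rw [smul_eq_zero] at this
    exact this.elim (by norm_num) hqp
  refine T.down_closed hs ?_ (by simp)
  intro z hz
  simp only [Finset.mem_insert, Finset.mem_singleton] at hz
  rcases hz with rfl | rfl <;> assumption

/-- Radially consecutive neighbours of `p` span a triangle with `p`: points close to `p` in a
direction between them can only be covered by that triangle. -/
lemma Radial.consecutive (h : Radial A p F) {T : SimplicialComplex ℝ Plane}
    (hT : IsTriangulation A T) {a b : Plane} (ha : a ∈ A.erase p) (hb : b ∈ A.erase p)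
    (hpa : ({p, a} : Finset Plane) ∈ T.faces) (hpb : ({p, b} : Finset Plane) ∈ T.faces)
    (hab : raySlope F p a < raySlope F p b)
    (hcons : ∀ c ∈ A.erase p, ({p, c} : Finset Plane) ∈ T.faces →
      ¬ (raySlope F p a < raySlope F p c ∧ raySlope F p c < raySlope F p b)) :
    ({p, a, b} : Finset Plane) ∈ T.faces := by
  obtain ⟨ε, hε0, hε1, hε2⟩ : ∃ ε : ℝ, 0 < ε ∧ ε ≤ 1 / 2 ∧
      p + ε • ((a - p) + (b - p)) ∉ convexHull ℝ ((A.erase p : Finset Plane) : Set Plane) := by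
    have hop : IsOpen (convexHull ℝ ((A.erase p : Finset Plane) : Set Plane))ᶜ :=
      ((A.erase p).finite_toSet.isCompact_convexHull (𝕜 := ℝ)).isClosed.isOpen_compl
    have hcont : Continuous fun ε : ℝ => p + ε • ((a - p) + (b - p)) := by fun_prop
    have hev : ∀ᶠ ε in nhds (0 : ℝ), p + ε • ((a - p) + (b - p)) ∈
        (convexHull ℝ ((A.erase p : Finset Plane) : Set Plane))ᶜ := by
      refine hcont.continuousAt.eventually (hop.mem_nhds ?_)
      simpa using h.ext
    obtain ⟨δ, hδ, hball⟩ := Metric.eventually_nhds_iff.1 hev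
    have hm : 0 < min (δ / 2) (1 / 2) := by positivity
    refine ⟨min (δ / 2) (1 / 2), hm, min_le_right _ _, hball ?_⟩
    rw [Real.dist_eq, sub_zero, abs_of_pos hm]
    exact (min_le_left _ _).trans_lt (by linarith)
  set x : Plane := p + ε • ((a - p) + (b - p)) with hx
  have hsubA : (({p, a, b} : Finset Plane) : Set Plane) ⊆ (A : Set Plane) := by
    intro z hz
    simp only [Finset.coe_insert, Finset.coe_singleton, Set.mem_insert_iff,
      Set.mem_singleton_iff] at hz
    rcases hz with rfl | rfl | rfl
    · exact h.mem
    · exact Finset.mem_of_mem_erase ha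
    · exact Finset.mem_of_mem_erase hb
  have hxA : x ∈ convexHull ℝ (A : Set Plane) :=
    convexHull_mono hsubA (mem_hull_triple hε0.le hε0.le (by linarith) (by rw [hx]; module))
  obtain ⟨s, hs, hxs⟩ := hT.exists_face hxA
  have hsA := hT.subset hs
  have hps : p ∈ s := by
    by_contra hps
    refine hε2 (convexHull_mono ?_ hxs)
    intro y hy
    exact Finset.mem_coe.2 (Finset.mem_erase.2 ⟨by rintro rfl; exact hps hy, hsA hy⟩)
  obtain ⟨w, h0, h1, h2⟩ := mem_hull_iff.1 hxs
  have hv : ε • ((a - p) + (b - p)) = ∑ y ∈ s.erase p, w y • (y - p) := by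
    have e1 : x - p = ∑ y ∈ s, w y • (y - p) := by
      simp only [smul_sub]
      rw [Finset.sum_sub_distrib, h2, ← Finset.sum_smul, h1, one_smul]
    rw [← Finset.add_sum_erase s _ hps, sub_self, smul_zero, zero_add] at e1
    rw [← e1, hx]
    module
  have hD := (h.lt_iff ha hb).1 hab
  have hedge : ∀ q ∈ s, ({p, q} : Finset Plane) ∈ T.faces := fun q hq => by
    refine T.down_closed hs ?_ (by simp)
    intro z hz
    simp only [Finset.mem_insert, Finset.mem_singleton] at hz
    rcases hz with rfl | rfl <;> assumption
  have hcard : (s.erase p).card ≤ 2 := by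
    rw [Finset.card_erase_of_mem hps]
    have := hT.1 s hs
    omega
  have hins : insert p (s.erase p) = s := Finset.insert_erase hps
  have hw : ∀ y ∈ s.erase p, 0 ≤ w y := fun y hy => h0 y (Finset.mem_of_mem_erase hy)
  have hmem : ∀ y ∈ s.erase p, y ∈ A.erase p := fun y hy =>
    Finset.erase_subset_erase p hsA hy
  have hmem' : ∀ y ∈ s.erase p, y ∈ s := fun y hy => Finset.mem_of_mem_erase hy
  -- the direction of `x` lies strictly between `a` and `b`
  have hva : area F (a - p) (∑ y ∈ s.erase p, w y • (y - p)) = ε * area F (a - p) (b - p) := by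
    rw [← hv, area_smul_right, area_add_right, area_self, zero_add]
  have hvb : area F (b - p) (∑ y ∈ s.erase p, w y • (y - p)) = - (ε * area F (a - p) (b - p)) := by
    rw [← hv, area_smul_right, area_add_right, area_self, add_zero, area_swap]
    ring
  have hεD : 0 < ε * area F (a - p) (b - p) := mul_pos hε0 hD
  obtain hc | hc | hc : (s.erase p).card = 0 ∨ (s.erase p).card = 1 ∨ (s.erase p).card = 2 := by
    omega
  · rw [Finset.card_eq_zero] at hc
    rw [hc, Finset.sum_empty] at hva
    simp only [area, map_zero, mul_zero, zero_mul, sub_zero] at hva hεD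
    linarith
  · obtain ⟨q, hq⟩ := Finset.card_eq_one.1 hc
    rw [hq] at hw hmem hmem' hva hvb
    have hqm := hmem q (by simp)
    have hw' := hw q (by simp)
    rw [Finset.sum_singleton, area_smul_right] at hva hvb
    refine absurd ⟨(h.lt_iff ha hqm).2 ?_, (h.lt_iff hqm hb).2 ?_⟩
      (hcons q hqm (hedge q (hmem' q (by simp))))
    · exact pos_of_mul_pos_right (by rw [hva]; exact hεD) hw'
    · rw [area_swap]
      have : 0 < w q * (- area F (b - p) (q - p)) := by linarith
      exact pos_of_mul_pos_right this hw'
  · obtain ⟨q, r, hqr, hs2⟩ : ∃ q r, raySlope F p q < raySlope F p r ∧ s.erase p = {q, r} := by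
      obtain ⟨q, r, hqr, hs2⟩ := Finset.card_eq_two.1 hc
      have hqm := hmem q (by simp [hs2])
      have hrm := hmem r (by simp [hs2])
      rcases lt_trichotomy (raySlope F p q) (raySlope F p r) with hl | hl | hl
      · exact ⟨q, r, hl, hs2⟩
      · exact absurd (h.inj hqm hrm hl) hqr
      · exact ⟨r, q, hl, by rw [hs2, Finset.pair_comm]⟩
    rw [hs2] at hw hmem hmem' hva hvb hins
    have hqm := hmem q (by simp)
    have hrm := hmem r (by simp)
    have hwq := hw q (by simp)
    have hwr := hw r (by simp)
    have hne : q ≠ r := by rintro rfl; exact lt_irrefl _ hqr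
    rw [Finset.sum_pair hne, area_add_right, area_smul_right, area_smul_right] at hva hvb
    have hnn : ∀ {u v : Plane}, u ∈ A.erase p → v ∈ A.erase p → raySlope F p u ≤ raySlope F p v →
        0 ≤ area F (u - p) (v - p) := fun {u v} hu hv' huv => by
      rcases huv.lt_or_eq with hl | hl
      · exact ((h.lt_iff hu hv').1 hl).le
      · rw [h.inj hu hv' hl, area_self]
    have hqb : raySlope F p q < raySlope F p b := by
      by_contra! hc
      have e1 := mul_nonneg hwq (hnn hb hqm hc)
      have e2 := mul_nonneg hwr (hnn hb hrm (hc.trans hqr.le))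
      linarith
    have har : raySlope F p a < raySlope F p r := by
      by_contra! hc
      have e1 := mul_nonneg hwr (hnn hrm ha hc)
      have e2 := mul_nonneg hwq (hnn hqm ha (hqr.le.trans hc))
      rw [area_swap F (q - p)] at e2
      rw [area_swap F (r - p)] at e1
      linarith
    have hqa : raySlope F p q ≤ raySlope F p a := by
      by_contra! hc
      exact hcons q hqm (hedge q (hmem' q (by simp))) ⟨hc, hqb⟩
    have hbr : raySlope F p b ≤ raySlope F p r := by
      by_contra! hc
      exact hcons r hrm (hedge r (hmem' r (by simp))) ⟨har, hc⟩
    have hs' : ({p, q, r} : Finset Plane) ∈ T.faces := by rw [hins]; exact hs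
    have e1 : q = a := by
      rcases hqa.lt_or_eq with hl | hl
      · exact (h.not_between hqm hrm ha hs' hpa hl har).elim
      · exact h.inj hqm ha hl
    have e2 : b = r := by
      rcases hbr.lt_or_eq with hl | hl
      · exact (h.not_between hqm hrm hb hs' hpb hqb hl).elim
      · exact h.inj hb hrm hl
    rw [← e1, e2]
    exact hs'

/-- Edges `a b` and `c d` of a complex, met in the radial order `a, c, b, d`, would cross, provided
that neither `c` nor `b` lies in the triangle which `p` spans with the other edge. -/
lemma Radial.noncrossing (h : Radial A p F) {T' : SimplicialComplex ℝ Plane} {a b c d : Plane}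
    (ha : a ∈ A.erase p) (hb : b ∈ A.erase p) (hc : c ∈ A.erase p) (hd : d ∈ A.erase p)
    (hab : ({a, b} : Finset Plane) ∈ T'.faces) (hcd : ({c, d} : Finset Plane) ∈ T'.faces)
    (h1 : raySlope F p a < raySlope F p c) (h2 : raySlope F p c < raySlope F p b)
    (h3 : raySlope F p b < raySlope F p d)
    (hcn : c ∉ convexHull ℝ (({p, a, b} : Finset Plane) : Set Plane))
    (hbn : b ∉ convexHull ℝ (({p, c, d} : Finset Plane) : Set Plane)) : False := by
  obtain ⟨α, β, hα, hβ, e1⟩ := h.cone ha hb hc h1 h2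
  obtain ⟨γ, δ, hγ, hδ, e2⟩ := h.cone hc hd hb h2 h3
  have hσ1 : 0 < α + β - 1 := by
    by_contra! hh
    exact hcn (mem_hull_triple hα.le hβ.le (by linarith) e1)
  have hσ2 : 0 < γ + δ - 1 := by
    by_contra! hh
    exact hbn (mem_hull_triple hγ.le hδ.le (by linarith) e2)
  -- eliminating `p` from the two relations exhibits the crossing point of the chords
  set σ := α + β - 1 with hσ
  set τ := γ + δ - 1 with hτ
  have hM : 0 < σ + τ + σ * τ := by positivity
  set M := σ + τ + σ * τ with hMd
  have hY1 : (τ * α / M) • a + ((τ * β + σ) / M) • b ∈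
      convexHull ℝ (({a, b} : Finset Plane) : Set Plane) := by
    rw [Finset.coe_pair, convexHull_pair]
    refine ⟨_, _, by positivity, by positivity, ?_, rfl⟩
    field_simp
    rw [hMd, hσ]
    ring
  have hY2 : (τ * α / M) • a + ((τ * β + σ) / M) • b ∈
      convexHull ℝ (({c, d} : Finset Plane) : Set Plane) := by
    rw [Finset.coe_pair, convexHull_pair]
    refine ⟨(τ + σ * γ) / M, σ * δ / M, by positivity, by positivity, ?_, ?_⟩
    · field_simp
      rw [hMd, hτ]
      ring
    · have e1' : c = α • a + β • b - σ • p := by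
        rw [hσ]; linear_combination (norm := module) (1 : ℝ) • e1
      have e2' : b = γ • c + δ • d - τ • p := by
        rw [hτ]; linear_combination (norm := module) (1 : ℝ) • e2
      linear_combination (norm := module) (τ / M) • e1' - (σ / M) • e2'
  have hY := T'.inter_subset_convexHull hab hcd ⟨hY1, hY2⟩
  have hemp : ((({a, b} : Finset Plane) : Set Plane) ∩ (({c, d} : Finset Plane) : Set Plane))
      = ∅ := by
    rw [Set.eq_empty_iff_forall_notMem]
    rintro z ⟨hz1, hz2⟩
    simp only [Finset.coe_insert, Finset.coe_singleton, Set.mem_insert_iff,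
      Set.mem_singleton_iff] at hz1 hz2
    rcases hz1 with rfl | rfl <;> rcases hz2 with rfl | rfl <;> linarith
  rw [hemp, convexHull_empty] at hY
  exact hY

/-- The link of `p` determines its star. -/
lemma Radial.star_subset (h : Radial A p F) {T₁ T₂ : SimplicialComplex ℝ Plane}
    (hT₁ : IsTriangulation A T₁) (hT₂ : IsTriangulation A T₂)
    (hlink : ∀ q ∈ A.erase p,
      (({p, q} : Finset Plane) ∈ T₁.faces ↔ ({p, q} : Finset Plane) ∈ T₂.faces))
    {s : Finset Plane} (hps : p ∈ s) (hs : s ∈ T₁.faces) : s ∈ T₂.faces := by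
  have hsA := hT₁.subset hs
  have hins : insert p (s.erase p) = s := Finset.insert_erase hps
  have hmem : ∀ y ∈ s.erase p, y ∈ A.erase p := fun y hy =>
    Finset.erase_subset_erase p hsA hy
  have hedge : ∀ q ∈ s.erase p, ({p, q} : Finset Plane) ∈ T₁.faces := fun q hq => by
    refine T₁.down_closed hs ?_ (by simp)
    intro z hz
    simp only [Finset.mem_insert, Finset.mem_singleton] at hz
    rcases hz with rfl | rfl
    exacts [hps, Finset.mem_of_mem_erase hq]
  have hcard : (s.erase p).card ≤ 2 := by
    rw [Finset.card_erase_of_mem hps]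
    have := hT₁.1 s hs
    omega
  obtain hc | hc | hc : (s.erase p).card = 0 ∨ (s.erase p).card = 1 ∨ (s.erase p).card = 2 := by
    omega
  · rw [Finset.card_eq_zero] at hc
    rw [hc] at hins
    rw [← hins]
    have : p ∈ T₂.vertices := by rw [hT₂.2.2]; exact h.mem
    exact this
  · obtain ⟨q, hq⟩ := Finset.card_eq_one.1 hc
    have hq' : q ∈ s.erase p := by simp [hq]
    rw [← hins, hq]
    exact (hlink q (hmem q hq')).1 (hedge q hq')
  · obtain ⟨q, r, hqr, hs2⟩ : ∃ q r, raySlope F p q < raySlope F p r ∧ s.erase p = {q, r} := by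
      obtain ⟨q, r, hqr, hs2⟩ := Finset.card_eq_two.1 hc
      have hqm := hmem q (by simp [hs2])
      have hrm := hmem r (by simp [hs2])
      rcases lt_trichotomy (raySlope F p q) (raySlope F p r) with hl | hl | hl
      · exact ⟨q, r, hl, hs2⟩
      · exact absurd (h.inj hqm hrm hl) hqr
      · exact ⟨r, q, hl, by rw [hs2, Finset.pair_comm]⟩
    have hq' : q ∈ s.erase p := by simp [hs2]
    have hr' : r ∈ s.erase p := by simp [hs2]
    rw [hs2] at hins
    rw [← hins] at hs ⊢
    refine h.consecutive hT₂ (hmem q hq') (hmem r hr') ((hlink q (hmem q hq')).1 (hedge q hq'))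
      ((hlink r (hmem r hr')).1 (hedge r hr')) hqr fun c hc hpc hh => ?_
    exact h.not_between (hmem q hq') (hmem r hr') hc hs ((hlink c hc).2 hpc) hh.1 hh.2

/-! ### The triangulation away from the inserted point -/

/-- The barycentre of a nonempty finite set is a point of its hull, all of whose weights are
positive. -/
lemma exists_interior {t : Finset Plane} (ht : t.Nonempty) :
    ∃ (w : Plane → ℝ) (x : Plane), (∀ y ∈ t, 0 < w y) ∧ ∑ y ∈ t, w y = 1 ∧
      ∑ y ∈ t, w y • y = x ∧ x ∈ convexHull ℝ (t : Set Plane) := by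
  have hc : (0 : ℝ) < t.card := by exact_mod_cast ht.card_pos
  have hw : ∀ y ∈ t, 0 < (fun _ : Plane => (1 : ℝ) / t.card) y := fun y _ => by positivity
  have h1 : ∑ y ∈ t, (fun _ : Plane => (1 : ℝ) / t.card) y = 1 := by
    rw [Finset.sum_const, nsmul_eq_mul]
    field_simp
  exact ⟨_, _, hw, h1, rfl, mem_hull_iff.2 ⟨_, fun y hy => (hw y hy).le, h1, rfl⟩⟩

/-- If the star of `p` in `T₂` is contained in that in `T₁`, and the edges of both off `p` come
from a common complex `T'`, then every edge of `T₁` off `p` is an edge of `T₂`: if the face of `T₂`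
covering its midpoint did not contain it, it would leave that face through an edge of `T'`. -/
lemma edge_transfer {T' T₁ T₂ : SimplicialComplex ℝ Plane}
    (hT' : IsTriangulation (A.erase p) T')
    (hT₁ : ObtainedByInserting A p T' T₁) (hT₂ : ObtainedByInserting A p T' T₂)
    (hstar : ∀ s : Finset Plane, p ∈ s → s ∈ T₂.faces → s ∈ T₁.faces)
    {t : Finset Plane} (ht : t ∈ T₁.faces) (hpt : p ∉ t) (hc : t.card = 2) : t ∈ T₂.faces := by
  have htne : t.Nonempty := Finset.card_pos.1 (by omega)
  have ht' := hT₁.2 t ht hc hpt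
  have htA := hT₁.1.subset ht
  obtain ⟨w, x, hw, h1, h2, hx⟩ := exists_interior htne
  obtain ⟨s, hs, hxs⟩ := hT₂.1.exists_face (convexHull_mono (by exact_mod_cast htA) hx)
  suffices hts : t ⊆ s from T₂.down_closed hs hts htne
  by_cases hps : p ∈ s
  · exact subset_of_pos (T₁.indep ht) hw h1 h2
      (T₁.inter_subset_convexHull ht (hstar s hps hs) ⟨hx, hxs⟩)
  by_cases hall : ∀ a ∈ t, a ∈ convexHull ℝ (s : Set Plane)
  · exact fun a ha => hT₂.1.mem_of_mem_hull hs (htA ha) (hall a ha)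
  push Not at hall
  obtain ⟨a, ha, has⟩ := hall
  have hsA := hT₂.1.subset hs
  have hsne := SimplicialComplex.nonempty_of_mem_faces hs
  have hs3 := hT₂.1.1 s hs
  have hspos := hsne.card_pos
  obtain hsc | hsc | hsc : s.card = 1 ∨ s.card = 2 ∨ s.card = 3 := by omega
  · obtain ⟨c, rfl⟩ := Finset.card_eq_one.1 hsc
    have hcp : c ∈ T'.vertices := by
      rw [hT'.2.2]
      exact Finset.mem_coe.2 (Finset.mem_erase.2
        ⟨by rintro rfl; exact hps (by simp), hsA (by simp)⟩)
    exact subset_of_pos (T'.indep ht') hw h1 h2 (T'.inter_subset_convexHull ht' hcp ⟨hx, hxs⟩)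
  · exact subset_of_pos (T'.indep ht') hw h1 h2
      (T'.inter_subset_convexHull ht' (hT₂.2 s hs hsc hps) ⟨hx, hxs⟩)
  · obtain ⟨y, hy, v, hv, hyv⟩ := exists_exit (T₂.indep hs) hsc hxs has
    have hfc : (s.erase v).card = 2 := by rw [Finset.card_erase_of_mem hv]; omega
    have hf : s.erase v ∈ T₂.faces :=
      T₂.down_closed hs (Finset.erase_subset _ _) (Finset.card_pos.1 (by omega))
    have hf' := hT₂.2 _ hf hfc (fun hh => hps (Finset.mem_of_mem_erase hh))
    have hyt : y ∈ convexHull ℝ (t : Set Plane) :=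
      (convex_convexHull ℝ _).segment_subset (subset_convexHull ℝ _ ha) hx hy
    have hyi := T'.inter_subset_convexHull ht' hf' ⟨hyt, hyv⟩
    have haf : a ∉ s.erase v := fun hh =>
      has (subset_convexHull ℝ _ (Finset.mem_coe.2 (Finset.mem_of_mem_erase hh)))
    have hyx := no_exit_from_vertex (T'.indep ht') ha haf hx hyi hy
    rw [hyx] at hyi
    exact absurd (subset_of_pos (T'.indep ht') hw h1 h2 hyi ha) haf

/-- If `T₁` and `T₂`, both inserting `p` into `T'`, have the same star at `p`, then all faces of
`T₁` are faces of `T₂`. -/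
lemma face_transfer {T' T₁ T₂ : SimplicialComplex ℝ Plane}
    (hT' : IsTriangulation (A.erase p) T')
    (hT₁ : ObtainedByInserting A p T' T₁) (hT₂ : ObtainedByInserting A p T' T₂)
    (hstar : ∀ s : Finset Plane, p ∈ s → (s ∈ T₁.faces ↔ s ∈ T₂.faces)) :
    T₁.faces ⊆ T₂.faces := by
  intro t ht
  by_cases hpt : p ∈ t
  · exact (hstar t hpt).1 ht
  have hst : ∀ s : Finset Plane, p ∈ s → s ∈ T₂.faces → s ∈ T₁.faces :=
    fun s hs => (hstar s hs).2
  have htA := hT₁.1.subset ht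
  have htne := SimplicialComplex.nonempty_of_mem_faces ht
  have ht3 := hT₁.1.1 t ht
  have htpos := htne.card_pos
  obtain htc | htc | htc : t.card = 1 ∨ t.card = 2 ∨ t.card = 3 := by omega
  · obtain ⟨c, rfl⟩ := Finset.card_eq_one.1 htc
    have : c ∈ T₂.vertices := by
      rw [hT₂.1.2.2]
      exact htA (by simp)
    exact this
  · exact edge_transfer hT' hT₁ hT₂ hst ht hpt htc
  · obtain ⟨w, x, hw, h1, h2, hx⟩ := exists_interior htne
    obtain ⟨s, hs, hxs⟩ := hT₂.1.exists_face (convexHull_mono (by exact_mod_cast htA) hx)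
    have hsA := hT₂.1.subset hs
    by_cases hall : ∀ v ∈ s, v ∈ convexHull ℝ (t : Set Plane)
    · have hsub : s ⊆ t := fun v hv => hT₁.1.mem_of_mem_hull ht (hsA hv) (hall v hv)
      refine T₂.down_closed hs (subset_of_pos (T₁.indep ht) hw h1 h2 ?_) htne
      rwa [← Finset.coe_inter, Finset.inter_eq_right.2 hsub]
    · push Not at hall
      obtain ⟨v, hv, hvt⟩ := hall
      obtain ⟨y, hy, u, hu, hyu⟩ := exists_exit (T₁.indep ht) htc hx hvt
      have hfc : (t.erase u).card = 2 := by rw [Finset.card_erase_of_mem hu]; omega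
      have hf : t.erase u ∈ T₂.faces :=
        edge_transfer hT' hT₁ hT₂ hst
          (T₁.down_closed ht (Finset.erase_subset _ _) (Finset.card_pos.1 (by omega)))
          (fun hh => hpt (Finset.mem_of_mem_erase hh)) hfc
      have hys : y ∈ convexHull ℝ (s : Set Plane) :=
        (convex_convexHull ℝ _).segment_subset (subset_convexHull ℝ _ hv) hxs hy
      have hvf : v ∉ t.erase u := fun hh =>
        hvt (subset_convexHull ℝ _ (Finset.mem_coe.2 (Finset.mem_of_mem_erase hh)))
      have hyx := no_exit_from_vertex (T₂.indep hs) hv hvf hxs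
        (T₂.inter_subset_convexHull hs hf ⟨hys, hyu⟩) hy
      -- the interior point `x` of `t` cannot lie on an edge of `t`
      have hsub : t ⊆ t.erase u := subset_of_pos (T₁.indep ht) hw h1 h2 (by
        rw [← Finset.coe_inter, Finset.inter_eq_right.2 (Finset.erase_subset _ _), ← hyx]
        exact hyu)
      exact absurd (hsub hu) (Finset.notMem_erase _ _)

/-- The neighbours of `p` in `T`. -/
noncomputable def nbrs (A : Finset Plane) (p : Plane) (T : SimplicialComplex ℝ Plane) :
    Finset Plane :=
  (A.erase p).filter fun q => ({p, q} : Finset Plane) ∈ T.faces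

lemma mem_nbrs {T : SimplicialComplex ℝ Plane} {q : Plane} :
    q ∈ nbrs A p T ↔ q ∈ A.erase p ∧ ({p, q} : Finset Plane) ∈ T.faces := by
  simp [nbrs]

lemma Radial.eq_of_nbrs_eq (h : Radial A p F) {T' T₁ T₂ : SimplicialComplex ℝ Plane}
    (hT' : IsTriangulation (A.erase p) T')
    (hT₁ : ObtainedByInserting A p T' T₁) (hT₂ : ObtainedByInserting A p T' T₂)
    (hn : nbrs A p T₁ = nbrs A p T₂) : T₁ = T₂ := by
  have hlink : ∀ q ∈ A.erase p,
      (({p, q} : Finset Plane) ∈ T₁.faces ↔ ({p, q} : Finset Plane) ∈ T₂.faces) := fun q hq => by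
    have := congrArg (q ∈ ·) hn
    simpa only [mem_nbrs, hq, true_and, eq_iff_iff] using this
  have hstar : ∀ s : Finset Plane, p ∈ s → (s ∈ T₁.faces ↔ s ∈ T₂.faces) := fun s hs =>
    ⟨h.star_subset hT₁.1 hT₂.1 hlink hs,
      h.star_subset hT₂.1 hT₁.1 (fun q hq => (hlink q hq).symm) hs⟩
  exact SimplicialComplex.ext ((face_transfer hT' hT₁ hT₂ hstar).antisymm
    (face_transfer hT' hT₂ hT₁ fun s hs => (hstar s hs).symm))

lemma degree_eq_card_nbrs {T : SimplicialComplex ℝ Plane} (hT : IsTriangulation A T) :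
    degree T p = (nbrs A p T).card := by
  have hset : {s : Finset Plane | s ∈ T.faces ∧ s.card = 2 ∧ p ∈ s} =
      (((nbrs A p T).image fun q => ({p, q} : Finset Plane) : Finset (Finset Plane)) :
        Set (Finset Plane)) := by
    ext s
    simp only [Set.mem_ofPred_eq, Finset.coe_image, Set.mem_image, Finset.mem_coe, mem_nbrs]
    constructor
    · rintro ⟨hs, hc, hps⟩
      obtain ⟨q, hq⟩ : ∃ q, s.erase p = {q} := by
        rw [← Finset.card_eq_one, Finset.card_erase_of_mem hps, hc]
      have hins : insert p (s.erase p) = s := Finset.insert_erase hps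
      rw [hq] at hins
      have hqs : q ∈ s.erase p := by simp [hq]
      exact ⟨q, ⟨Finset.erase_subset_erase p (hT.subset hs) hqs, by rw [hins]; exact hs⟩, hins⟩
    · rintro ⟨q, ⟨hq, hf⟩, rfl⟩
      exact ⟨hf, Finset.card_pair (Finset.ne_of_mem_erase hq).symm, by simp⟩
  rw [degree, hset, Nat.card_coe_set_eq, Set.ncard_coe_finset, Finset.card_image_of_injOn]
  intro q hq r hr hqr
  have hq' := Finset.ne_of_mem_erase (mem_nbrs.1 hq).1
  have : q ∈ ({p, r} : Finset Plane) := by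
    rw [← show ({p, q} : Finset Plane) = {p, r} from hqr]
    simp
  simp only [Finset.mem_insert, Finset.mem_singleton] at this
  exact this.resolve_left hq'

/-! ### Links as paths of non-crossing chords -/

/-- The relation on slopes given by the edges of `T'` whose triangle with `p` contains no further
point of `A`: the only edges that can occur in the link of `p`. -/
def chord (A : Finset Plane) (p : Plane) (F : Plane →ₗ[ℝ] ℝ) (T' : SimplicialComplex ℝ Plane)
    (u v : ℝ) : Prop :=
  ∃ a ∈ A.erase p, ∃ b ∈ A.erase p, raySlope F p a = u ∧ raySlope F p b = v ∧
    ({a, b} : Finset Plane) ∈ T'.faces ∧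
    ∀ c ∈ A, c ∈ convexHull ℝ (({p, a, b} : Finset Plane) : Set Plane) →
      c ∈ ({p, a, b} : Finset Plane)

lemma Radial.chord_noncrossing (h : Radial A p F) {T' : SimplicialComplex ℝ Plane}
    (u v u' v' : ℝ) (h1 : chord A p F T' u v) (h2 : chord A p F T' u' v') (h3 : u < u')
    (h4 : u' < v) (h5 : v < v') : False := by
  obtain ⟨a, ha, b, hb, rfl, rfl, hab, hemp1⟩ := h1
  obtain ⟨c, hc, d, hd, rfl, rfl, hcd, hemp2⟩ := h2
  refine h.noncrossing ha hb hc hd hab hcd h3 h4 h5 (fun hh => ?_) (fun hh => ?_)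
  · have := hemp1 c (Finset.mem_of_mem_erase hc) hh
    simp only [Finset.mem_insert, Finset.mem_singleton] at this
    rcases this with rfl | rfl | rfl
    · exact Finset.ne_of_mem_erase hc rfl
    · exact lt_irrefl _ h3
    · exact lt_irrefl _ h4
  · have := hemp2 b (Finset.mem_of_mem_erase hb) hh
    simp only [Finset.mem_insert, Finset.mem_singleton] at this
    rcases this with rfl | rfl | rfl
    · exact Finset.ne_of_mem_erase hb rfl
    · exact lt_irrefl _ h4
    · exact lt_irrefl _ h5

/-- The slopes of the link of `p` form a path of chords between the extreme slopes. -/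
lemma Radial.image_mem_chains (h : Radial A p F) {T' T : SimplicialComplex ℝ Plane}
    (hT : ObtainedByInserting A p T' T) {a b : Plane} (ha : a ∈ A.erase p) (hb : b ∈ A.erase p)
    (hmin : ∀ c ∈ A.erase p, raySlope F p a ≤ raySlope F p c)
    (hmax : ∀ c ∈ A.erase p, raySlope F p c ≤ raySlope F p b) {m : ℕ}
    (hdeg : degree T p = m + 2) :
    (nbrs A p T).image (raySlope F p) ∈ chains (chord A p F T') ((A.erase p).image (raySlope F p))
      (raySlope F p a) (raySlope F p b) (m + 1) := by
  have hsub : nbrs A p T ⊆ A.erase p := Finset.filter_subset _ _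
  have hlt : ∀ {u v : Plane}, u ∈ A.erase p → v ∈ A.erase p → raySlope F p u ≤ raySlope F p v →
      v ≠ u → 0 < area F (u - p) (v - p) := fun {u v} hu hv huv hne =>
    (h.lt_iff hu hv).1 (lt_of_le_of_ne huv fun e => hne (h.inj hu hv e).symm)
  rw [mem_chains]
  refine ⟨Finset.image_subset_image hsub, ?_, ?_, ?_, ?_, ?_⟩
  · refine Finset.mem_image_of_mem _ (mem_nbrs.2 ⟨ha, ?_⟩)
    refine h.extreme_edge hT.1 ha (F (a - p) • rot F - rot F (a - p) • F) ?_ fun y hy hya => ?_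
    · simp only [LinearMap.sub_apply, LinearMap.smul_apply, smul_eq_mul]
      ring
    · have := hlt ha hy (hmin y hy) hya
      simp only [LinearMap.sub_apply, LinearMap.smul_apply, smul_eq_mul]
      rw [area] at this
      linarith
  · refine Finset.mem_image_of_mem _ (mem_nbrs.2 ⟨hb, ?_⟩)
    refine h.extreme_edge hT.1 hb (rot F (b - p) • F - F (b - p) • rot F) ?_ fun y hy hyb => ?_
    · simp only [LinearMap.sub_apply, LinearMap.smul_apply, smul_eq_mul]
      ring
    · have := hlt hy hb (hmax y hy) hyb.symm
      simp only [LinearMap.sub_apply, LinearMap.smul_apply, smul_eq_mul]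
      rw [area] at this
      linarith
  · intro x hx
    obtain ⟨c, hc, rfl⟩ := Finset.mem_image.1 hx
    exact ⟨hmin c (hsub hc), hmax c (hsub hc)⟩
  · rw [Finset.card_image_of_injOn (fun c hc d hd e => h.inj (hsub hc) (hsub hd) e),
      ← degree_eq_card_nbrs hT.1, hdeg]
  · intro x hx y hy hxy hcons
    obtain ⟨c, hc, rfl⟩ := Finset.mem_image.1 hx
    obtain ⟨d, hd, rfl⟩ := Finset.mem_image.1 hy
    obtain ⟨hc, hpc⟩ := mem_nbrs.1 hc
    obtain ⟨hd, hpd⟩ := mem_nbrs.1 hd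
    have htri := h.consecutive hT.1 hc hd hpc hpd hxy fun e he hpe =>
      hcons _ (Finset.mem_image_of_mem _ (mem_nbrs.2 ⟨he, hpe⟩))
    refine ⟨c, hc, d, hd, rfl, rfl, ?_, fun e he hh => hT.1.mem_of_mem_hull htri he hh⟩
    refine hT.2 _ (T.down_closed htri (Finset.subset_insert _ _) (by simp)) ?_ ?_
    · exact Finset.card_pair (by rintro rfl; exact lt_irrefl _ hxy)
    · simp only [Finset.mem_insert, Finset.mem_singleton, not_or]
      exact ⟨(Finset.ne_of_mem_erase hc).symm, (Finset.ne_of_mem_erase hd).symm⟩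

lemma Radial.card_le_catalan (h : Radial A p F) (hne : (A.erase p).Nonempty)
    {T' : SimplicialComplex ℝ Plane} (hT' : IsTriangulation (A.erase p) T') (m : ℕ) :
    Nat.card {T : SimplicialComplex ℝ Plane |
      ObtainedByInserting A p T' T ∧ degree T p = m + 2} ≤ catalan m := by
  obtain ⟨a, ha, hmin⟩ := (A.erase p).exists_min_image (raySlope F p) hne
  obtain ⟨b, hb, hmax⟩ := (A.erase p).exists_max_image (raySlope F p) hne
  have hsub : ∀ T, nbrs A p T ⊆ A.erase p := fun T => Finset.filter_subset _ _
  let C := chains (chord A p F T') ((A.erase p).image (raySlope F p))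
      (raySlope F p a) (raySlope F p b) (m + 1)
  let f : {T : SimplicialComplex ℝ Plane | ObtainedByInserting A p T' T ∧ degree T p = m + 2} →
      C := fun T => ⟨(nbrs A p T.1).image (raySlope F p),
        h.image_mem_chains T.2.1 ha hb hmin hmax T.2.2⟩
  have hf : Function.Injective f := by
    rintro ⟨T₁, h₁⟩ ⟨T₂, h₂⟩ e
    have e' : (nbrs A p T₁).image (raySlope F p) = (nbrs A p T₂).image (raySlope F p) :=
      congrArg Subtype.val e
    refine Subtype.ext (h.eq_of_nbrs_eq hT' h₁.1 h₂.1 ?_)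
    have hinj : Set.InjOn (raySlope F p) (A.erase p : Finset Plane) :=
      fun c hc d hd hcd => h.inj hc hd hcd
    ext q
    constructor
    · intro hq
      have := Finset.mem_image_of_mem (raySlope F p) hq
      rw [e'] at this
      obtain ⟨r, hr, hrq⟩ := Finset.mem_image.1 this
      rwa [← hinj (hsub _ hr) (hsub _ hq) hrq]
    · intro hq
      have := Finset.mem_image_of_mem (raySlope F p) hq
      rw [← e'] at this
      obtain ⟨r, hr, hrq⟩ := Finset.mem_image.1 this
      rwa [← hinj (hsub _ hr) (hsub _ hq) hrq]
  calc _ ≤ Nat.card C := Nat.card_le_card_of_injective f hf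
    _ = C.card := by rw [Nat.card_eq_fintype_card, Fintype.card_coe]
    _ ≤ catalan m := card_chains_le h.chord_noncrossing m _ _

end Radial

theorem insertion_count_bounds_boundary_point
    (A : Finset Plane)
    (hgen : InGeneralPosition A)
    (hdim : affineSpan ℝ (A : Set Plane) = ⊤)
    (p : Plane) (hp : p ∈ A)
    (hpbd : p ∈ frontier (convexHull ℝ (A : Set Plane)))
    (hdim' : affineSpan ℝ ((A.erase p : Finset Plane) : Set Plane) = ⊤)
    (T' : SimplicialComplex ℝ Plane)
    (hT' : IsTriangulation (A.erase p) T')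
    (h : ℕ → ℕ)
    (hh : ∀ i, h i = Nat.card {T : SimplicialComplex ℝ Plane |
      ObtainedByInserting A p T' T ∧ degree T p = i}) :
    (∀ i, 2 ≤ i → h i ≤ catalan (i - 2)) ∧
    h 2 ≤ 1 ∧ h 3 ≤ 1 ∧ h 4 ≤ 2 := by
  have hne : (A.erase p).Nonempty := by
    rw [Finset.nonempty_iff_ne_empty]
    intro hemp
    rw [hemp, Finset.coe_empty, AffineSubspace.span_empty] at hdim'
    exact bot_ne_top hdim'
  obtain ⟨F, hF⟩ := exists_radial hgen hdim hp hpbd hne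
  have key : ∀ i, 2 ≤ i → h i ≤ catalan (i - 2) := by
    intro i hi
    obtain ⟨m, rfl⟩ := Nat.exists_eq_add_of_le' hi
    rw [hh]
    exact hF.card_le_catalan hne hT' m
  refine ⟨key, ?_, ?_, ?_⟩
  · simpa using key 2 le_rfl
  · simpa using key 3 (by norm_num)
  · simpa [catalan_two] using key 4 (by norm_num)
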